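/- Let u be an infinite word over a finite alphabet which is not ultimately periodic and satisfies p_u(n) ≤ C·n for all n ≥ 1. Then for every n ≥ 1, every factor of u of length (C+1)·n contains a right special factor of u of length n as a factor; i.e., the set of right special factors of u of length n is a set of (C+1)-markers. -/

import Mathlib

/-!
A factor of length `(C+1)·n` has `C·n + 1` windows of length `n`, while `u` has at most `C·n`
factors of that length, so two windows, at positions `a < a + p`, carry the same word. If no window
were right special, each of the windows at `a, …, a + p - 1` would determine the letter that
follows it. The factors of length `n` read from `a` onwards then repeat with period `p` for ever
(`segs_periodic`), and `u` is ultimately periodic.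
-/

/-- The factor of the infinite word `u` of length `n` starting at position `i`. -/
def wordSeg {α : Type*} (u : ℕ → α) (i n : ℕ) : List α :=
  (List.range n).map (fun t => u (i + t))

/-- The set of (finite) factors of the infinite word `u`. -/
def Factors {α : Type*} (u : ℕ → α) : Set (List α) :=
  {w | ∃ i, w = wordSeg u i w.length}

/-- Subword complexity: the number of distinct factors of `u` of length `n`. -/
noncomputable def complexity {α : Type*} (u : ℕ → α) (n : ℕ) : ℕ :=
  {w : List α | w.length = n ∧ w ∈ Factors u}.ncard

/-- `p_L(n)`: the number of words of length `n` in the language `L`. -/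
noncomputable def langComplexity {α : Type*} (L : Set (List α)) (n : ℕ) : ℕ :=
  {w ∈ L | w.length = n}.ncard

/-- `u` is ultimately periodic: `u = v w w w ⋯` for some finite `v` and nonempty `w`. -/
def UltimatelyPeriodic {α : Type*} (u : ℕ → α) : Prop :=
  ∃ p, 0 < p ∧ ∃ N, ∀ i, N ≤ i → u (i + p) = u i

/-- `v` is a right special factor of `u`: `va` and `vb` are factors of `u` for two
distinct letters `a ≠ b`. -/
def RightSpecial {α : Type*} (u : ℕ → α) (v : List α) : Prop :=
  ∃ a b : α, a ≠ b ∧ (v ++ [a]) ∈ Factors u ∧ (v ++ [b]) ∈ Factors u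

lemma wordSeg_length {α : Type*} (u : ℕ → α) (i n : ℕ) : (wordSeg u i n).length = n := by
  simp [wordSeg]

lemma wordSeg_succ {α : Type*} (u : ℕ → α) (i n : ℕ) :
    wordSeg u i (n + 1) = wordSeg u i n ++ [u (i + n)] := by
  simp [wordSeg, List.range_succ]

lemma wordSeg_mem {α : Type*} (u : ℕ → α) (i n : ℕ) : wordSeg u i n ∈ Factors u :=
  ⟨i, by rw [wordSeg_length]⟩

lemma wordSeg_eq_iff {α : Type*} (u : ℕ → α) (i j n : ℕ) :
    wordSeg u i n = wordSeg u j n ↔ ∀ t < n, u (i + t) = u (j + t) := by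
  simp [wordSeg]

lemma wordSeg_add {α : Type*} (u : ℕ → α) (i m n : ℕ) :
    wordSeg u i (m + n) = wordSeg u i m ++ wordSeg u (i + m) n := by
  simp [wordSeg, List.range_add, add_assoc]

lemma wordSeg_infix {α : Type*} (u : ℕ → α) (i k n N : ℕ) (h : k + n ≤ N) :
    wordSeg u (i + k) n <:+: wordSeg u i N := by
  obtain ⟨r, rfl⟩ := Nat.exists_eq_add_of_le h
  exact ⟨wordSeg u i k, wordSeg u (i + (k + n)) r, by rw [wordSeg_add, wordSeg_add]⟩

/-- A factor that is not right special has a unique right extension, so equal occurrences of it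
remain equal after a shift by one. -/
lemma wordSeg_shift {α : Type*} {u : ℕ → α} {i j n : ℕ} (h : wordSeg u i n = wordSeg u j n)
    (hs : ¬ RightSpecial u (wordSeg u i n)) :
    wordSeg u (i + 1) n = wordSeg u (j + 1) n := by
  have hl : u (i + n) = u (j + n) := by
    by_contra hne
    refine hs ⟨_, _, hne, ?_, ?_⟩
    · rw [← wordSeg_succ]; exact wordSeg_mem _ _ _
    · rw [h, ← wordSeg_succ]; exact wordSeg_mem _ _ _
  rw [wordSeg_eq_iff] at h ⊢
  intro t ht
  rw [add_right_comm i, add_right_comm j, add_assoc, add_assoc]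
  rcases Nat.lt_or_ge (t + 1) n with h1 | h1
  · exact h _ h1
  · obtain rfl : t + 1 = n := by omega
    exact hl

/-- Once the factor at `a` recurs at `a + p` with no right special factor of length `n` in
between, the factors of length `n` are `p`-periodic from `a` on and never become right special. -/
lemma segs_periodic {α : Type*} {u : ℕ → α} {a p n : ℕ} (hp : 0 < p)
    (h : wordSeg u a n = wordSeg u (a + p) n)
    (hs : ∀ m < p, ¬ RightSpecial u (wordSeg u (a + m) n)) (m : ℕ) :
    wordSeg u (a + m) n = wordSeg u (a + m + p) n ∧ ¬ RightSpecial u (wordSeg u (a + m) n) := by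
  induction m using Nat.strong_induction_on with
  | _ m ih =>
    refine ⟨?_, ?_⟩
    · cases m with
      | zero => simpa using h
      | succ k =>
        obtain ⟨h1, h2⟩ := ih k (by omega)
        have := wordSeg_shift h1 h2
        rwa [add_right_comm (a + k)] at this
    · rcases Nat.lt_or_ge m p with hm | hm
      · exact hs m hm
      · obtain ⟨h1, h2⟩ := ih (m - p) (by omega)
        rw [show a + (m - p) + p = a + m by omega] at h1
        rwa [← h1]

/-- Pigeonhole on the `N + 1` windows of length `n` starting in `[i, i + N]`. -/
lemma exists_repeat {α : Type*} [Fintype α] (u : ℕ → α) (i n N : ℕ) (hc : complexity u n ≤ N) :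
    ∃ k p, 0 < p ∧ k + p ≤ N ∧ wordSeg u (i + k) n = wordSeg u (i + k + p) n := by
  have hfin : {w : List α | w.length = n ∧ w ∈ Factors u}.Finite :=
    (List.finite_length_eq α n).subset fun w hw => hw.1
  have hcard : hfin.toFinset.card < (Finset.range (N + 1)).card := by
    rw [← Set.ncard_eq_toFinset_card _ hfin, Finset.card_range]
    exact Nat.lt_succ_of_le hc
  obtain ⟨x, hx, y, hy, hne, hxy⟩ := Finset.exists_ne_map_eq_of_card_lt_of_maps_to hcard
    (f := fun k => wordSeg u (i + k) n)
    (fun k _ => by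
      simpa using ⟨wordSeg_length u (i + k) n, wordSeg_mem u (i + k) n⟩)
  simp only [Finset.mem_range] at hx hy
  rcases Nat.lt_or_gt_of_ne hne with hlt | hlt
  · exact ⟨x, y - x, by omega, by omega, by
      rw [show i + x + (y - x) = i + y by omega]; exact hxy⟩
  · exact ⟨y, x - y, by omega, by omega, by
      rw [show i + y + (x - y) = i + x by omega]; exact hxy.symm⟩

/-- for a non-ultimately-periodic word `u` with `p_u(n) ≤ C·n`, every factor
of `u` of length `(C+1)·n` contains a right special factor of `u` of length `n`; i.e. the
right special factors of length `n` form a set of `(C+1)`-markers. -/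
theorem stmt6 {α : Type*} [Fintype α] (u : ℕ → α) (C : ℕ)
    (hnp : ¬ UltimatelyPeriodic u)
    (hp : ∀ n, 1 ≤ n → complexity u n ≤ C * n) :
    ∀ n, 1 ≤ n → ∀ w ∈ Factors u, w.length = (C + 1) * n →
      ∃ v : List α, v.length = n ∧ RightSpecial u v ∧ v <:+: w := by
  intro n hn w ⟨i, hi⟩ hw
  rw [hw, add_mul, one_mul] at hi
  subst hi
  by_contra hcon
  obtain ⟨k, p, hp0, hkp, heq⟩ := exists_repeat u i n (C * n) (hp n hn)
  have hs : ∀ m < p, ¬ RightSpecial u (wordSeg u (i + k + m) n) := by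
    intro m hm hR
    refine hcon ⟨_, wordSeg_length _ _ _, hR, ?_⟩
    rw [add_assoc]
    exact wordSeg_infix u i (k + m) n _ (by omega)
  refine hnp ⟨p, hp0, i + k, fun j hj => ?_⟩
  have h := (segs_periodic hp0 heq hs (j - (i + k))).1
  rw [show i + k + (j - (i + k)) = j by omega, wordSeg_eq_iff] at h
  -- Comparing first letters suffices, since `1 ≤ n`.
  exact (h 0 hn).symm
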